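/- Let V be a C⁵ perturbed quartic potential with ℓ ∈ {−1,1} equal to the sign of V⁽⁴⁾(0). For every T > 0 there exist v₀ > 0 and C > 0 such that for all t ∈ [0,T] and all |v| < v₀, the solution x(v;t) of ẍ = −V'(x) with x(v;0) = 0, ẋ(v;0) = v satisfies |x(v;t) − v sin(e_ℓ(v)t) + (1/8)v³ g_ℓ(e_ℓ(v)t)| ≤ C v⁴; in particular |x(v;t) − v sin t| ≤ C(|v|³|t| + v⁴). -/

import Mathlib

open Real Filter Asymptotics Topology

/-- `V` is a C⁵ perturbed quartic potential `V(x) = x²/2 + ℓx⁴/4 + f(x)` with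
`ℓ ∈ {-1,1}` (equal to the sign of `V⁽⁴⁾(0)`) and `|f⁽ⁱ⁾(x)| = O(|x|^{5-i})` as `x → 0`. -/
def PerturbedQuartic (V f : ℝ → ℝ) (l : ℝ) : Prop :=
  (l = 1 ∨ l = -1) ∧ ContDiff ℝ 5 f ∧
  (∀ x : ℝ, V x = x ^ 2 / 2 + l * x ^ 4 / 4 + f x) ∧
  (∀ i : ℕ, i ≤ 5 → (iteratedDeriv i f) =O[𝓝 0] fun x : ℝ => |x| ^ (5 - i))

/-- `e_ℓ(v) = 1 + j_ℓ v²` with `j₁ = 1/2`, `j₋₁ = -1/4`. -/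
noncomputable def eCoef (l v : ℝ) : ℝ :=
  1 + (if l = 1 then (1 : ℝ) / 2 else -(1 : ℝ) / 4) * v ^ 2

/-- `g_ℓ(t) = t cos t + ℓ(sin t cos²t + 2 sin t)`. -/
noncomputable def gFun (l t : ℝ) : ℝ :=
  t * Real.cos t + l * (Real.sin t * Real.cos t ^ 2 + 2 * Real.sin t)

/-!
This is the Poincaré–Lindstedt method. Write `ω = 1 + j v²` and let `X(t) = v sin ωt - v³ g(ωt)/8`
be the proposed approximation. Since `g'' + g = 8ℓ sin³ - 2(1 + 3ℓ) sin`, the choice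
`8j = 1 + 3ℓ` makes the terms of order `v³` in `X'' + X + ℓ (v sin ωt)³` cancel, so that this
quantity is `O(v⁵)`; moreover `X'(0) = v + O(v⁵)`. Energy conservation gives `x = O(v)`, so
`x'' + x = O(v³)`, and Duhamel's formula for the harmonic oscillator yields
`x - v sin t = O(v³ t)`. Hence `x - v sin ωt = O(v³)`, and `x³` may be replaced by `(v sin ωt)³`
up to `O(v⁵)`. The difference `x - X` then solves a harmonic oscillator with forcing `O(v⁴)`, and a
second use of Duhamel's formula bounds it by `O(v⁴)`.
-/

section ForcedOscillator

variable {E : Type*} [NormedAddCommGroup E] [NormedSpace ℝ E]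

theorem norm_le_of_forced_oscillator {h h' r : ℝ → E} {R t : ℝ}
    (hh : ∀ s, HasDerivAt h (h' s) s) (hh' : ∀ s, HasDerivAt h' (r s - h s) s) (h_zero : h 0 = 0)
    (hr : ∀ s ∈ Set.uIcc 0 t, ‖r s‖ ≤ R) : ‖h t‖ ≤ (‖h' 0‖ + R) * |t| := by
  -- Duhamel's formula: the integrand is the derivative of this function, equal to `h t` at `s = t`.
  let F : ℝ → E := fun s => cos (t - s) • h s + sin (t - s) • h' s
  have hF (s : ℝ) : HasDerivAt F (sin (t - s) • r s) s := by
    have hsub : HasDerivAt (fun s => t - s) (-1) s := by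
      simpa using (hasDerivAt_id s).const_sub t
    refine ((hsub.cos.smul (hh s)).add (hsub.sin.smul (hh' s))).congr_deriv ?_
    module
  have hF_sub : ‖F t - F 0‖ ≤ R * |t| := by
    simpa using (convex_uIcc 0 t).norm_image_sub_le_of_norm_hasDerivWithin_le
      (fun s _ => (hF s).hasDerivWithinAt)
      (fun s hs => (norm_smul_le _ _).trans
        ((mul_le_of_le_one_left (norm_nonneg _) (abs_sin_le_one _)).trans (hr s hs)))
      Set.left_mem_uIcc Set.right_mem_uIcc
  calc ‖h t‖ = ‖sin t • h' 0 + (F t - F 0)‖ := by simp [F, h_zero]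
    _ ≤ |sin t| * ‖h' 0‖ + ‖F t - F 0‖ := by
        simpa only [norm_smul, norm_eq_abs] using norm_add_le (sin t • h' 0) (F t - F 0)
    _ ≤ |t| * ‖h' 0‖ + R * |t| := by gcongr ?_ * _ + ?_; exact abs_sin_le_abs
    _ = (‖h' 0‖ + R) * |t| := by ring

theorem isBigO_of_forced_oscillator {ι : Type*} {𝓕 : Filter ι} {h h' r : ι → ℝ → E} {φ : ι → ℝ}
    {T : ℝ} (hh : ∀ᶠ i in 𝓕, ∀ t, HasDerivAt (h i) (h' i t) t)
    (hh' : ∀ᶠ i in 𝓕, ∀ t, HasDerivAt (h' i) (r i t - h i t) t) (h_zero : ∀ᶠ i in 𝓕, h i 0 = 0)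
    (h'_zero : (fun i => h' i 0) =O[𝓕] φ)
    (hr : (fun p : ι × ℝ => r p.1 p.2) =O[𝓕 ×ˢ 𝓟 (Set.Icc (-T) T)] fun p => φ p.1) :
    (fun p : ι × ℝ => h p.1 p.2) =O[𝓕 ×ˢ 𝓟 (Set.Icc (-T) T)] fun p => φ p.1 * p.2 := by
  obtain ⟨A, hA⟩ := h'_zero.bound
  obtain ⟨B, hB⟩ := hr.bound
  refine .of_bound (A + B) (eventually_prod_principal_iff.mpr ?_)
  filter_upwards [hh, hh', h_zero, hA, eventually_prod_principal_iff.mp hB]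
    with i hi hi' hi_zero hAi hBi t ht
  have hsub : Set.uIcc 0 t ⊆ Set.Icc (-T) T :=
    Set.OrdConnected.uIcc_subset Set.ordConnected_Icc
      ⟨by linarith [ht.1, ht.2], by linarith [ht.1, ht.2]⟩ ht
  calc ‖h i t‖ ≤ (‖h' i 0‖ + B * ‖φ i‖) * |t| :=
        norm_le_of_forced_oscillator hi hi' hi_zero fun s hs => hBi s (hsub hs)
    _ ≤ (A * ‖φ i‖ + B * ‖φ i‖) * |t| := by gcongr
    _ = (A + B) * ‖φ i * t‖ := by rw [norm_mul, norm_eq_abs t]; ring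

end ForcedOscillator

/-- The curve `x` solves `ẍ = -V'(x)` with `x(0) = 0` and `ẋ(0) = v`. -/
structure IsTrajectory (V : ℝ → ℝ) (v : ℝ) (x : ℝ → ℝ) : Prop where
  hasDerivAt (t : ℝ) : HasDerivAt x (deriv x t) t
  hasDerivAt_deriv (t : ℝ) : HasDerivAt (deriv x) (-deriv V (x t)) t
  map_zero : x 0 = 0
  deriv_zero : deriv x 0 = v

namespace IsTrajectory

variable {V x : ℝ → ℝ} {v : ℝ}

theorem of_contDiff (hx : ContDiff ℝ 2 x) (h_zero : x 0 = 0) (h_deriv : deriv x 0 = v)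
    (h_ode : ∀ t, deriv (deriv x) t = -deriv V (x t)) : IsTrajectory V v x where
  hasDerivAt t := (hx.differentiable two_ne_zero t).hasDerivAt
  hasDerivAt_deriv t := by
    rw [← h_ode t]
    exact (hx.differentiable_deriv_two t).hasDerivAt
  map_zero := h_zero
  deriv_zero := h_deriv

theorem energy_eq (hx : IsTrajectory V v x) (hV : Differentiable ℝ V) (t : ℝ) :
    deriv x t ^ 2 / 2 + V (x t) = v ^ 2 / 2 + V 0 := by
  have hE (s : ℝ) : HasDerivAt (fun s => deriv x s ^ 2 / 2 + V (x s)) 0 s := by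
    refine ((((hx.hasDerivAt_deriv s).pow 2).div_const 2).add
      ((hV (x s)).hasDerivAt.comp s (hx.hasDerivAt s))).congr_deriv ?_
    ring
  simpa only [hx.map_zero, hx.deriv_zero] using
    is_const_of_deriv_eq_zero (fun s => (hE s).differentiableAt) (fun s => (hE s).deriv) t 0

theorem mul_abs_le_of_quadratic_le (hx : IsTrajectory V v x) (hV : Differentiable ℝ V) {c δ : ℝ}
    (hc : 0 < c) (hV_lower : ∀ y, |y| ≤ δ → (c * y) ^ 2 / 2 ≤ V y - V 0) (hv : |v| < c * δ)
    (t : ℝ) : c * |x t| ≤ |v| := by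
  have bound_of_le (s : ℝ) (hs : |x s| ≤ δ) : c * |x s| ≤ |v| := by
    rw [← abs_of_pos hc, ← abs_mul, ← sq_le_sq]
    linarith [hV_lower _ hs, hx.energy_eq hV s, sq_nonneg (deriv x s)]
  -- An orbit leaving the region `|y| ≤ δ` would cross `|y| = δ`, contradicting the bound there.
  refine bound_of_le t (not_lt.mp fun h_gt => ?_)
  have hx_cont : Continuous fun s => |x s| :=
    (continuous_iff_continuousAt.mpr fun s => (hx.hasDerivAt s).continuousAt).abs
  have hδ : 0 ≤ δ := (pos_of_mul_pos_right ((abs_nonneg v).trans_lt hv) hc.le).le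
  obtain ⟨s, hs⟩ : δ ∈ Set.range fun s => |x s| :=
    mem_range_of_exists_le_of_exists_ge hx_cont ⟨0, by simpa [hx.map_zero]⟩ ⟨t, h_gt.le⟩
  have h_cross := bound_of_le s hs.le
  rw [show |x s| = δ from hs] at h_cross
  exact h_cross.not_gt hv

end IsTrajectory

theorem eventually_quadratic_le {V : ℝ → ℝ} (hV : Differentiable ℝ V)
    (hV_lin : (fun y => deriv V y - y) =o[𝓝 0] fun y => y) {c : ℝ} (hc : |c| < 1) :
    ∀ᶠ y in 𝓝 0, (c * y) ^ 2 / 2 ≤ V y - V 0 := by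
  have hd (y : ℝ) : HasDerivAt (fun y => V y - y ^ 2 / 2) (deriv V y - y) y := by
    refine ((hV y).hasDerivAt.sub (((hasDerivAt_id y).pow 2).div_const 2)).congr_deriv ?_
    simp
  have h_taylor : (fun y => V y - y ^ 2 / 2 - V 0) =o[𝓝 0] fun y => y ^ 2 := by
    simpa using convex_univ.isLittleO_pow_succ_real (x₀ := 0) (n := 1) (Set.mem_univ 0)
      (fun y _ => (hd y).hasDerivWithinAt) (by simpa using hV_lin)
  have hc_sq : 0 < (1 - c ^ 2) / 2 := half_pos (sub_pos.mpr ((sq_lt_one_iff_abs_lt_one c).mpr hc))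
  filter_upwards [h_taylor.bound hc_sq] with y hy
  rw [norm_eq_abs, norm_eq_abs, abs_of_nonneg (sq_nonneg y)] at hy
  linarith [(abs_le.mp hy).1]

/-- The filter expressing `v → 0` uniformly in `t ∈ [-T, T]` for pairs `(v, t)`. -/
abbrev smallVelocity (T : ℝ) : Filter (ℝ × ℝ) :=
  𝓝 0 ×ˢ 𝓟 (Set.Icc (-T) T)

theorem isBigO_one_smallVelocity_of_continuous {F : ℝ × ℝ → ℝ} (hF : Continuous F) (T : ℝ) :
    F =O[smallVelocity T] fun _ => (1 : ℝ) := by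
  have h_le : smallVelocity T ≤ 𝓟 (Set.Icc (-1) 1 ×ˢ Set.Icc (-T) T) := by
    rw [← prod_principal_principal]
    exact prod_mono_left _ (le_principal_iff.mpr (Icc_mem_nhds (by norm_num) (by norm_num)))
  exact (hF.continuousOn.isBigO_principal (isCompact_Icc.prod isCompact_Icc) (by simp)).mono h_le

/-- The coefficient `j` in the frequency `1 + j v²`; it cancels the resonant forcing at order
`v³`. -/
noncomputable def frequencyShift (l : ℝ) : ℝ := (1 + 3 * l) / 8

/-- The amplitude-dependent frequency `1 + j v²`, for arbitrary `ℓ`. -/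
noncomputable def frequency (l v : ℝ) : ℝ := 1 + frequencyShift l * v ^ 2

theorem eCoef_eq_frequency {l : ℝ} (hl : l = 1 ∨ l = -1) : eCoef l = frequency l := by
  funext v
  rcases hl with rfl | rfl <;> norm_num [eCoef, frequency, frequencyShift]

theorem gFun_eq (l t : ℝ) : gFun l t = t * cos t + l * (3 * sin t - sin t ^ 3) := by
  simp only [gFun, cos_sq']
  ring

theorem deriv_gFun (l : ℝ) :
    deriv (gFun l) = fun t => cos t - t * sin t + 3 * l * cos t ^ 3 := by
  funext t
  rw [funext (gFun_eq l)]
  refine HasDerivAt.deriv ((((hasDerivAt_id t).mul (hasDerivAt_cos t)).add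
    ((((hasDerivAt_sin t).const_mul 3).sub ((hasDerivAt_sin t).pow 3)).const_mul l)).congr_deriv ?_)
  have h_cube : cos t ^ 3 = (1 - sin t ^ 2) * cos t := by rw [← cos_sq']; ring
  simp only [h_cube, id]
  ring

theorem differentiable_gFun (l : ℝ) : Differentiable ℝ (gFun l) := by
  unfold gFun
  fun_prop

theorem hasDerivAt_deriv_gFun (l t : ℝ) :
    HasDerivAt (deriv (gFun l)) (8 * l * sin t ^ 3 - 2 * (1 + 3 * l) * sin t - gFun l t) t := by
  rw [deriv_gFun]
  refine (((hasDerivAt_cos t).sub ((hasDerivAt_id t).mul (hasDerivAt_sin t))).add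
    (((hasDerivAt_cos t).pow 3).const_mul (3 * l))).congr_deriv ?_
  simp only [gFun_eq, cos_sq', id, Nat.add_one_sub_one]
  ring

/-- The third-order Poincaré–Lindstedt approximation of the trajectory with initial velocity
`v`. -/
noncomputable def lindstedt (l v t : ℝ) : ℝ :=
  v * sin (frequency l v * t) - 1 / 8 * v ^ 3 * gFun l (frequency l v * t)

/-- The coefficient of `v⁵` in the defect of `lindstedt l v` in the equation `ẍ + x + ℓx³ = 0`,
with the cube evaluated at `v sin (frequency l v * t)`. -/
noncomputable def lindstedtDefect (l v t : ℝ) : ℝ :=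
  -(frequencyShift l ^ 2 * sin (frequency l v * t)) -
    (2 * frequencyShift l + frequencyShift l ^ 2 * v ^ 2) / 8 *
      (8 * l * sin (frequency l v * t) ^ 3 - 2 * (1 + 3 * l) * sin (frequency l v * t)
        - gFun l (frequency l v * t))

theorem hasDerivAt_lindstedt (l v t : ℝ) :
    HasDerivAt (lindstedt l v) (frequency l v * (v * cos (frequency l v * t)
      - 1 / 8 * v ^ 3 * deriv (gFun l) (frequency l v * t))) t := by
  have hs := (hasDerivAt_id t).const_mul (frequency l v)
  refine ((hs.sin.const_mul v).sub (((differentiable_gFun l _).hasDerivAt.comp t hs).const_mul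
    (1 / 8 * v ^ 3))).congr_deriv ?_
  simp only [id]
  ring

theorem deriv_lindstedt_zero (l v : ℝ) :
    deriv (lindstedt l v) 0 = v - frequencyShift l ^ 2 * v ^ 5 := by
  simp only [(hasDerivAt_lindstedt l v 0).deriv, deriv_gFun, frequency, frequencyShift, mul_zero,
    cos_zero, sin_zero]
  ring

theorem hasDerivAt_deriv_lindstedt (l v t : ℝ) :
    HasDerivAt (deriv (lindstedt l v)) (v ^ 5 * lindstedtDefect l v t
      - l * (v * sin (frequency l v * t)) ^ 3 - lindstedt l v t) t := by
  have hs := (hasDerivAt_id t).const_mul (frequency l v)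
  rw [funext fun t => (hasDerivAt_lindstedt l v t).deriv]
  refine (((hs.cos.const_mul v).sub (((hasDerivAt_deriv_gFun l _).comp t hs).const_mul
    (1 / 8 * v ^ 3))).const_mul (frequency l v)).congr_deriv ?_
  simp only [id, lindstedt, lindstedtDefect]
  -- Protects the phase `(1 + j v²) t` from being expanded along with the factor `(1 + j v²)²`.
  generalize sin (frequency l v * t) = S, gFun l (frequency l v * t) = G
  simp only [frequency, frequencyShift]
  ring

theorem continuous_lindstedtDefect (l : ℝ) :
    Continuous fun p : ℝ × ℝ => lindstedtDefect l p.1 p.2 := by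
  unfold lindstedtDefect gFun frequency
  fun_prop

section Asymptotics

variable {V : ℝ → ℝ}

theorem isBigO_deriv_sub_id {l : ℝ}
    (hV' : (fun y => deriv V y - (y + l * y ^ 3)) =O[𝓝 0] fun y => y ^ 4) :
    (fun y => deriv V y - y) =O[𝓝 0] fun y => y ^ 3 := by
  have h_cubic : (fun y => l * y ^ 3) =O[𝓝 0] fun y => y ^ 3 := isBigO_const_mul_self l _ _
  exact ((hV'.trans (isLittleO_pow_pow (by norm_num)).isBigO).add h_cubic).congr_left
    fun y => by ring

variable {x : ℝ → ℝ → ℝ} (hV : Differentiable ℝ V) (hx : ∀ᶠ v in 𝓝 0, IsTrajectory V v (x v))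
  (T : ℝ)

include hV hx

theorem isBigO_trajectory (hV_lin : (fun y => deriv V y - y) =o[𝓝 0] fun y => y) :
    (fun p : ℝ × ℝ => x p.1 p.2) =O[smallVelocity T] fun p => p.1 := by
  obtain ⟨δ, hδ, hV_lower⟩ := Metric.nhds_basis_closedBall.eventually_iff.mp
    (eventually_quadratic_le hV hV_lin (c := 1 / 2) (by norm_num [abs_of_pos]))
  simp only [mem_closedBall_zero_iff, norm_eq_abs] at hV_lower
  refine .of_bound 2 (eventually_prod_principal_iff.mpr ?_)
  filter_upwards [hx, Metric.ball_mem_nhds 0 (show 0 < 1 / 2 * δ by positivity)] with v hxv hv t _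
  have h_bound : 1 / 2 * |x v t| ≤ |v| :=
    hxv.mul_abs_le_of_quadratic_le hV (by norm_num) (fun y hy => hV_lower hy)
      (mem_ball_zero_iff.mp hv) t
  simp only [norm_eq_abs]
  linarith

section CubicForce

variable (hV_cub : (fun y => deriv V y - y) =O[𝓝 0] fun y => y ^ 3)

include hV_cub

theorem isBigO_trajectory_of_cubic :
    (fun p : ℝ × ℝ => x p.1 p.2) =O[smallVelocity T] fun p => p.1 :=
  isBigO_trajectory hV hx T (hV_cub.trans_isLittleO (isLittleO_pow_id (by norm_num)))

theorem tendsto_trajectory :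
    Tendsto (fun p : ℝ × ℝ => x p.1 p.2) (smallVelocity T) (𝓝 0) :=
  (isBigO_trajectory_of_cubic hV hx T hV_cub).trans_tendsto tendsto_fst

theorem isBigO_trajectory_sub_sin :
    (fun p : ℝ × ℝ => x p.1 p.2 - p.1 * sin p.2) =O[smallVelocity T] fun p => p.1 ^ 3 * p.2 := by
  refine isBigO_of_forced_oscillator (h := fun v t => x v t - v * sin t)
    (h' := fun v t => deriv (x v) t - v * cos t) (r := fun v t => -(deriv V (x v t) - x v t))
    (φ := fun v => v ^ 3) ?_ ?_ ?_ ?_ ?_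
  · filter_upwards [hx] with v hxv t
    exact (hxv.hasDerivAt t).sub ((hasDerivAt_sin t).const_mul v)
  · filter_upwards [hx] with v hxv t
    refine ((hxv.hasDerivAt_deriv t).sub ((hasDerivAt_cos t).const_mul v)).congr_deriv ?_
    ring
  · filter_upwards [hx] with v hxv
    simp [hxv.map_zero]
  · refine (isBigO_zero _ _).congr' (hx.mono fun v hxv => ?_) .rfl
    simp [hxv.deriv_zero]
  · exact ((hV_cub.comp_tendsto (tendsto_trajectory hV hx T hV_cub)).trans
      ((isBigO_trajectory_of_cubic hV hx T hV_cub).pow 3)).neg_left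

theorem isBigO_trajectory_sub_sin_frequency (l : ℝ) :
    (fun p : ℝ × ℝ => x p.1 p.2 - p.1 * sin (frequency l p.1 * p.2))
      =O[smallVelocity T] fun p => p.1 ^ 3 := by
  have h_time : (fun p : ℝ × ℝ => p.1 ^ 3 * p.2) =O[smallVelocity T] fun p => p.1 ^ 3 := by
    simpa using (isBigO_refl (fun p : ℝ × ℝ => p.1 ^ 3) (smallVelocity T)).mul
      (isBigO_one_smallVelocity_of_continuous continuous_snd T)
  have h_phase : (fun p : ℝ × ℝ => p.1 * (sin p.2 - sin (frequency l p.1 * p.2)))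
      =O[smallVelocity T] fun p => p.1 ^ 3 * p.2 := by
    refine .of_bound |frequencyShift l| (.of_forall fun ⟨v, t⟩ => ?_)
    calc ‖v * (sin t - sin (frequency l v * t))‖
        ≤ |v| * |t - frequency l v * t| := by
          rw [norm_mul, norm_eq_abs, norm_eq_abs]
          exact mul_le_mul_of_nonneg_left (abs_sin_sub_sin_le _ _) (abs_nonneg v)
      _ = |frequencyShift l| * ‖v ^ 3 * t‖ := by
          rw [norm_eq_abs, ← abs_mul, ← abs_mul, ← abs_neg]
          congr 1
          rw [frequency]
          ring
  exact (((isBigO_trajectory_sub_sin hV hx T hV_cub).add h_phase).trans h_time).congr_left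
    fun p => by ring

theorem isBigO_cube_sub_cube (l : ℝ) :
    (fun p : ℝ × ℝ => x p.1 p.2 ^ 3 - (p.1 * sin (frequency l p.1 * p.2)) ^ 3)
      =O[smallVelocity T] fun p => p.1 ^ 5 := by
  have h_sin : (fun p : ℝ × ℝ => p.1 * sin (frequency l p.1 * p.2))
      =O[smallVelocity T] fun p => p.1 :=
    .of_bound' (.of_forall fun p => by
      rw [norm_mul]
      exact mul_le_of_le_one_right (norm_nonneg _) (abs_sin_le_one _))
  have hx_lin := isBigO_trajectory_of_cubic hV hx T hV_cub
  have h_quadratic := ((hx_lin.pow 2).add ((hx_lin.mul h_sin).congr_right fun p => (sq p.1).symm)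
    ).add (h_sin.pow 2)
  exact ((isBigO_trajectory_sub_sin_frequency hV hx T hV_cub l).mul h_quadratic).congr
    (fun p => by ring) (fun p => by ring)

end CubicForce

theorem isBigO_lindstedt_forcing {l : ℝ}
    (hV' : (fun y => deriv V y - (y + l * y ^ 3)) =O[𝓝 0] fun y => y ^ 4) :
    (fun p : ℝ × ℝ => -(deriv V (x p.1 p.2) - (x p.1 p.2 + l * x p.1 p.2 ^ 3))
        - l * (x p.1 p.2 ^ 3 - (p.1 * sin (frequency l p.1 * p.2)) ^ 3)
        - p.1 ^ 5 * lindstedtDefect l p.1 p.2) =O[smallVelocity T] fun p => p.1 ^ 4 := by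
  have hV_cub := isBigO_deriv_sub_id hV'
  have h_pow : (fun p : ℝ × ℝ => p.1 ^ 5) =O[smallVelocity T] fun p => p.1 ^ 4 :=
    (isLittleO_pow_pow (by norm_num)).isBigO.comp_tendsto tendsto_fst
  have h_force : (fun p : ℝ × ℝ => deriv V (x p.1 p.2) - (x p.1 p.2 + l * x p.1 p.2 ^ 3))
      =O[smallVelocity T] fun p => p.1 ^ 4 :=
    (hV'.comp_tendsto (tendsto_trajectory hV hx T hV_cub)).trans
      ((isBigO_trajectory_of_cubic hV hx T hV_cub).pow 4)
  have h_cube : (fun p : ℝ × ℝ =>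
      l * (x p.1 p.2 ^ 3 - (p.1 * sin (frequency l p.1 * p.2)) ^ 3))
      =O[smallVelocity T] fun p => p.1 ^ 4 :=
    ((isBigO_cube_sub_cube hV hx T hV_cub l).const_mul_left l).trans h_pow
  have h_defect : (fun p : ℝ × ℝ => p.1 ^ 5 * lindstedtDefect l p.1 p.2)
      =O[smallVelocity T] fun p => p.1 ^ 4 := by
    simpa using h_pow.mul
      (isBigO_one_smallVelocity_of_continuous (continuous_lindstedtDefect l) T)
  exact (h_force.neg_left.sub h_cube).sub h_defect

theorem isBigO_trajectory_sub_lindstedt {l : ℝ}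
    (hV' : (fun y => deriv V y - (y + l * y ^ 3)) =O[𝓝 0] fun y => y ^ 4) :
    (fun p : ℝ × ℝ => x p.1 p.2 - lindstedt l p.1 p.2) =O[smallVelocity T] fun p => p.1 ^ 4 := by
  have h_pow : (fun v : ℝ => v ^ 5) =O[𝓝 0] fun v => v ^ 4 :=
    (isLittleO_pow_pow (by norm_num)).isBigO
  have h_duhamel : (fun p : ℝ × ℝ => x p.1 p.2 - lindstedt l p.1 p.2)
      =O[smallVelocity T] fun p => p.1 ^ 4 * p.2 := by
    refine isBigO_of_forced_oscillator (h := fun v t => x v t - lindstedt l v t)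
      (h' := fun v t => deriv (x v) t - deriv (lindstedt l v) t)
      (r := fun v t => -(deriv V (x v t) - (x v t + l * x v t ^ 3))
        - l * (x v t ^ 3 - (v * sin (frequency l v * t)) ^ 3) - v ^ 5 * lindstedtDefect l v t)
      (φ := fun v => v ^ 4)
      ?_ ?_ ?_ ?_ (isBigO_lindstedt_forcing hV hx T hV')
    · filter_upwards [hx] with v hxv t
      exact (hxv.hasDerivAt t).sub (hasDerivAt_lindstedt l v t).differentiableAt.hasDerivAt
    · filter_upwards [hx] with v hxv t
      refine ((hxv.hasDerivAt_deriv t).sub (hasDerivAt_deriv_lindstedt l v t)).congr_deriv ?_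
      ring
    · filter_upwards [hx] with v hxv
      simp [hxv.map_zero, lindstedt, gFun]
    · refine (h_pow.const_mul_left (frequencyShift l ^ 2)).congr' (hx.mono fun v hxv => ?_) .rfl
      simp [hxv.deriv_zero, deriv_lindstedt_zero]
  simpa using h_duhamel.trans ((isBigO_refl _ _).mul
    (isBigO_one_smallVelocity_of_continuous continuous_snd T))

end Asymptotics

namespace PerturbedQuartic

variable {V f : ℝ → ℝ} {l : ℝ}

theorem hasDerivAt (hV : PerturbedQuartic V f l) (y : ℝ) :
    HasDerivAt V (y + l * y ^ 3 + deriv f y) y := by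
  obtain ⟨-, hf, hVf, -⟩ := hV
  rw [funext hVf]
  refine (((((hasDerivAt_id y).pow 2).div_const 2).add
    ((((hasDerivAt_id y).pow 4).const_mul l).div_const 4)).add
    (hf.differentiable (by norm_num) y).hasDerivAt).congr_deriv ?_
  simp only [id]
  ring

theorem differentiable (hV : PerturbedQuartic V f l) : Differentiable ℝ V :=
  fun y => (hV.hasDerivAt y).differentiableAt

theorem isBigO_deriv_sub (hV : PerturbedQuartic V f l) :
    (fun y => deriv V y - (y + l * y ^ 3)) =O[𝓝 0] fun y => y ^ 4 := by
  have hf' : deriv f =O[𝓝 0] fun y => y ^ 4 := by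
    simpa [iteratedDeriv_one, ← abs_pow] using hV.2.2.2 1 (by norm_num)
  exact hf'.congr_left fun y => by rw [(hV.hasDerivAt y).deriv]; ring

end PerturbedQuartic

theorem statement12_general {V : ℝ → ℝ} {l : ℝ} (hV : Differentiable ℝ V)
    (hV' : (fun y => deriv V y - (y + l * y ^ 3)) =O[𝓝 0] fun y => y ^ 4)
    {v₁ : ℝ} (hv₁ : 0 < v₁) {x : ℝ → ℝ → ℝ} (hx : ∀ v, |v| ≤ v₁ → IsTrajectory V v (x v)) (T : ℝ) :
    ∃ v₀ > (0 : ℝ), v₀ ≤ v₁ ∧ ∃ C > (0 : ℝ), ∀ v : ℝ, |v| < v₀ → ∀ t ∈ Set.Icc (-T) T,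
      |x v t - v * sin (frequency l v * t) + 1 / 8 * v ^ 3 * gFun l (frequency l v * t)|
          ≤ C * v ^ 4 ∧
      |x v t - v * sin t| ≤ C * (|v| ^ 3 * |t|) := by
  have hx_ev : ∀ᶠ v in 𝓝 0, IsTrajectory V v (x v) := by
    filter_upwards [Metric.ball_mem_nhds 0 hv₁] with v hv
    exact hx v (mem_ball_zero_iff.mp hv).le
  obtain ⟨A, hA_pos, hA⟩ := (isBigO_trajectory_sub_lindstedt hV hx_ev T hV').exists_pos
  obtain ⟨B, -, hB⟩ := (isBigO_trajectory_sub_sin hV hx_ev T (isBigO_deriv_sub_id hV')).exists_pos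
  obtain ⟨ε, hε, h_bound⟩ := Metric.eventually_nhds_iff_ball.mp
    (eventually_prod_principal_iff.mp (hA.bound.and hB.bound))
  refine ⟨min v₁ ε, lt_min hv₁ hε, min_le_left _ _, max A B, lt_max_of_lt_left hA_pos, ?_⟩
  intro v hv t ht
  obtain ⟨hA_vt, hB_vt⟩ :=
    h_bound v (mem_ball_zero_iff.mpr (hv.trans_le (min_le_right _ _))) t ht
  simp only [norm_eq_abs, abs_mul, abs_pow, Even.pow_abs (show Even 4 by decide)] at hA_vt hB_vt
  constructor
  · rw [sub_add]
    exact hA_vt.trans (by gcongr; exact le_max_left _ _)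
  · exact hB_vt.trans (by gcongr; exact le_max_right _ _)

/-- estimates for the solutions `x(v;t)` of `ẍ = -V'(x)`,
`x(0) = 0`, `ẋ(0) = v`, for a perturbed quartic potential `V`, on `[0,T]`. -/
theorem statement12 (V f : ℝ → ℝ) (l : ℝ) (hV : PerturbedQuartic V f l)
    (v₁ : ℝ) (hv₁ : 0 < v₁) (x : ℝ → ℝ → ℝ)
    (hx : ∀ v : ℝ, |v| ≤ v₁ → ContDiff ℝ 2 (x v) ∧ x v 0 = 0 ∧ deriv (x v) 0 = v ∧
      ∀ t : ℝ, deriv (deriv (x v)) t = -(deriv V (x v t))) :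
    ∀ T : ℝ, 0 < T → ∃ v₀ > (0 : ℝ), v₀ ≤ v₁ ∧ ∃ C > (0 : ℝ),
      ∀ v : ℝ, |v| < v₀ → ∀ t ∈ Set.Icc (0 : ℝ) T,
        |x v t - v * Real.sin (eCoef l v * t) + 1 / 8 * v ^ 3 * gFun l (eCoef l v * t)|
            ≤ C * v ^ 4 ∧
        |x v t - v * Real.sin t| ≤ C * (|v| ^ 3 * |t| + v ^ 4) := by
  intro T hT
  have hx_traj (v : ℝ) (hv : |v| ≤ v₁) : IsTrajectory V v (x v) :=
    let ⟨h_diff, h_zero, h_deriv, h_ode⟩ := hx v hv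
    .of_contDiff h_diff h_zero h_deriv h_ode
  obtain ⟨v₀, hv₀, hv₀_le, C, hC, h_bound⟩ :=
    statement12_general hV.differentiable hV.isBigO_deriv_sub hv₁ hx_traj T
  refine ⟨v₀, hv₀, hv₀_le, C, hC, fun v hv t ht => ?_⟩
  obtain ⟨h_lindstedt, h_sin⟩ := h_bound v hv t ⟨by linarith [ht.1], ht.2⟩
  rw [eCoef_eq_frequency hV.1]
  exact ⟨h_lindstedt, h_sin.trans (by gcongr; exact le_add_of_nonneg_right (by positivity))⟩
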